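/- arXiv:2102.00803 — 2 statements merged into one kernel-verified Lean document; each statement's English description precedes it below -/
import Mathlib

section
/- Let F ⊆ ℤ² be a cluster whose direction set dir(F) contains at most two lines, and let T be an F-tiling. Then T can be partitioned into at most two 1-periodic subsets: T = T₁ ∪ T₂ with T₁ ∩ T₂ = ∅, where each Tᵢ is either empty or 1-periodic. -/
/-! Write `t` for the indicator function of `T` and call `g ↦ g(· + v) - g` the difference operator
along `v`.

Reducing modulo primes `P > |F|` and using the Frobenius map shows that `T` also tiles with every
dilate `r F` whose factor `r` has only prime factors larger than `|F|` (`dilate`). In particular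
this holds for all `r = 1 + k q` with `q = |F|!`. Averaging these tiling equations over `k` shows,
for every base point `v₀ ∈ F`, that `t - 1` is annihilated by the product of the difference
operators along `q (v₀ - v)`, `v ∈ F`, `v ≠ v₀` (`tiling_annihilator`).

If the line spanned by `d` is not in the direction set, then some line parallel to `d` meets `F` in
one point only. With that point as base point all factors of the annihilator are transverse to `d`.
Now suppose that `t - 1` is killed by a product having a factor along `d`. The remaining factors
turn `t - 1` into a bounded `d`-periodic function which is also killed by differences transverse to
`d`, so it is periodic in every direction (`exists_period_of_transverse`), and the factor along
`d` can be replaced by one along a prescribed direction. A bounded function killed by the square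
of a difference operator is killed by the operator itself, so repeated factors can be dropped.
Hence only two factors, along vectors `A` and `B` spanning the at most two lines of the direction
set, are needed (`remove_factors`).

Finally, if the mixed difference of a `0`-`1` function along `A` and `B` vanishes, the function is
`A`-periodic or `B`-periodic on each coset of `ℤ A + ℤ B` (`split_of_mixed_diff`), which gives the
partition. -/

noncomputable section

/-- `T` is a tiling of `ℤ²` by translates of the cluster `F`. -/
def IsTiling (F : Finset (ℤ × ℤ)) (T : Set (ℤ × ℤ)) : Prop :=
  ∀ p : ℤ × ℤ, ∃! tv : (ℤ × ℤ) × (ℤ × ℤ), tv.1 ∈ T ∧ tv.2 ∈ F ∧ p = tv.1 + tv.2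

/-- The embedding of the integer lattice into the plane. -/
def toR (p : ℤ × ℤ) : ℝ × ℝ := ((p.1 : ℝ), (p.2 : ℝ))

/-- A line through the origin of `ℝ²`: the span of a nonzero vector. -/
def IsLine (ℓ : Submodule ℝ (ℝ × ℝ)) : Prop :=
  ∃ w : ℝ × ℝ, w ≠ 0 ∧ ℓ = Submodule.span ℝ {w}

/-- The direction set of `S ⊆ ℤ²`: lines `ℓ` through the origin such that every
translate of `ℓ` that meets `S` meets it in at least two points. -/
def dirSet (S : Set (ℤ × ℤ)) : Set (Submodule ℝ (ℝ × ℝ)) :=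
  {ℓ | IsLine ℓ ∧ ∀ a : ℝ × ℝ, (∃ s ∈ S, toR s - a ∈ ℓ) →
      ∃ s ∈ S, ∃ t ∈ S, s ≠ t ∧ toR s - a ∈ ℓ ∧ toR t - a ∈ ℓ}

/-- A subset of `ℤ²` is `1`-periodic if it is invariant under translation by some
nonzero vector. -/
def OnePeriodicSet (S : Set (ℤ × ℤ)) : Prop :=
  ∃ g : ℤ × ℤ, g ≠ 0 ∧ (fun p => p + g) '' S = S

/-! ### Difference operators on functions `ℤ² → ℤ` -/

/-- The difference operator `g ↦ g(· + v) - g`. -/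
def diffOp (v : ℤ × ℤ) : (ℤ × ℤ → ℤ) →ₗ[ℤ] (ℤ × ℤ → ℤ) where
  toFun g := fun p => g (p + v) - g p
  map_add' g h := by
    funext p
    simp only [Pi.add_apply]
    ring
  map_smul' c g := by
    funext p
    simp only [Pi.smul_apply, smul_eq_mul, RingHom.id_apply]
    ring

theorem diffOp_apply (v : ℤ × ℤ) (g : ℤ × ℤ → ℤ) (p : ℤ × ℤ) :
    diffOp v g p = g (p + v) - g p := rfl

theorem diffOp_comm (v w : ℤ × ℤ) (g : ℤ × ℤ → ℤ) :
    diffOp v (diffOp w g) = diffOp w (diffOp v g) := by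
  funext p
  simp only [diffOp_apply]
  rw [add_right_comm p v w]
  ring

/-- The composition of the difference operators along the vectors of a list. -/
def diffList : List (ℤ × ℤ) → (ℤ × ℤ → ℤ) →ₗ[ℤ] (ℤ × ℤ → ℤ)
  | [] => LinearMap.id
  | v :: L => diffOp v ∘ₗ diffList L

theorem diffList_nil (g : ℤ × ℤ → ℤ) : diffList [] g = g := rfl

theorem diffList_cons (v : ℤ × ℤ) (L : List (ℤ × ℤ)) (g : ℤ × ℤ → ℤ) :
    diffList (v :: L) g = diffOp v (diffList L g) := rfl

theorem diffList_diffOp (v : ℤ × ℤ) (L : List (ℤ × ℤ)) (g : ℤ × ℤ → ℤ) :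
    diffList L (diffOp v g) = diffOp v (diffList L g) := by
  induction L with
  | nil => rfl
  | cons w L ih => rw [diffList_cons, diffList_cons, ih, diffOp_comm]

theorem diffList_comm (L L' : List (ℤ × ℤ)) (g : ℤ × ℤ → ℤ) :
    diffList L (diffList L' g) = diffList L' (diffList L g) := by
  induction L with
  | nil => rfl
  | cons w L ih => rw [diffList_cons, diffList_cons, ih, diffList_diffOp]

/-- Boundedness of an integer-valued function on the lattice. -/
def BddFun (g : ℤ × ℤ → ℤ) : Prop := ∃ B : ℤ, ∀ p, |g p| ≤ B

theorem BddFun.diffOp {g : ℤ × ℤ → ℤ} (hg : BddFun g) (v : ℤ × ℤ) :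
    BddFun (diffOp v g) := by
  obtain ⟨B, hB⟩ := hg
  refine ⟨B + B, fun p => ?_⟩
  exact (abs_sub _ _).trans (add_le_add (hB _) (hB _))

theorem BddFun.diffList {g : ℤ × ℤ → ℤ} (hg : BddFun g) (L : List (ℤ × ℤ)) :
    BddFun (diffList L g) := by
  induction L with
  | nil => exact hg
  | cons v L ih => exact ih.diffOp v

theorem diffOp_eq_zero_iff {v : ℤ × ℤ} {g : ℤ × ℤ → ℤ} :
    diffOp v g = 0 ↔ ∀ p, g (p + v) = g p := by
  constructor
  · intro h p
    have := congrFun h p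
    rw [diffOp_apply] at this
    exact sub_eq_zero.mp this
  · intro h
    funext p
    rw [diffOp_apply, h p, sub_self]
    rfl

theorem periodic_zsmul {v : ℤ × ℤ} {g : ℤ × ℤ → ℤ} (h : ∀ p, g (p + v) = g p) (n : ℤ) :
    ∀ p, g (p + n • v) = g p := by
  have hp : Function.Periodic g v := h
  exact hp.zsmul n

theorem diffOp_zsmul_eq_zero {v : ℤ × ℤ} {g : ℤ × ℤ → ℤ} (h : diffOp v g = 0) (n : ℤ) :
    diffOp (n • v) g = 0 :=
  diffOp_eq_zero_iff.mpr (periodic_zsmul (diffOp_eq_zero_iff.mp h) n)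

/-- A bounded function is affine along a direction only if it is constant along it. -/
theorem diffOp_eq_zero_of_sq {w : ℤ × ℤ} {h : ℤ × ℤ → ℤ} (hb : BddFun h)
    (hsq : diffOp w (diffOp w h) = 0) : diffOp w h = 0 := by
  obtain ⟨B, hB⟩ := hb
  have hper := diffOp_eq_zero_iff.mp hsq
  have hlin : ∀ (n : ℕ) (p : ℤ × ℤ), h (p + (n : ℤ) • w) = h p + n * diffOp w h p := by
    intro n p
    induction n with
    | zero => simp
    | succ n ih =>
      have h1 := periodic_zsmul hper n p
      have h2 : diffOp w h (p + (n : ℤ) • w)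
          = h (p + ((n + 1 : ℕ) : ℤ) • w) - h (p + (n : ℤ) • w) := by
        rw [diffOp_apply]
        congr 2
        push_cast
        rw [add_smul, one_smul, add_assoc]
      rw [h1, ih] at h2
      push_cast at h2 ⊢
      linarith
  funext p
  by_contra hne
  have h1 : 1 ≤ |diffOp w h p| := Int.one_le_abs hne
  have hB0 : 0 ≤ B := (abs_nonneg _).trans (hB p)
  have h2 := hlin (2 * B + 1).toNat p
  rw [Int.toNat_of_nonneg (by linarith)] at h2
  have h3 : |(2 * B + 1) * diffOp w h p| ≤ 2 * B := by
    have : (2 * B + 1) * diffOp w h p = h (p + (2 * B + 1) • w) - h p := by linarith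
    rw [this]
    exact (abs_sub _ _).trans (by linarith [hB p, hB (p + (2 * B + 1) • w)])
  rw [abs_mul, abs_of_pos (by linarith : (0 : ℤ) < 2 * B + 1)] at h3
  nlinarith

/-- The determinant of two lattice vectors; it vanishes exactly when they are parallel. -/
def crossProd (v w : ℤ × ℤ) : ℤ := v.1 * w.2 - v.2 * w.1

/-- A bounded `d`-periodic function killed by differences in directions transverse to `d`
is periodic in every direction. By Cramer's rule a multiple of `a` is congruent modulo `d` to a
multiple of each transverse vector, so a power of one difference operator along `a` kills the
function. -/
theorem exists_period_of_transverse (d a : ℤ × ℤ) (E : List (ℤ × ℤ)) :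
    ∀ c : ℤ × ℤ → ℤ, BddFun c → diffOp d c = 0 → (∀ e ∈ E, crossProd d e ≠ 0) →
      diffList E c = 0 → ∃ M : ℤ, M ≠ 0 ∧ diffOp (M • a) c = 0 := by
  induction E with
  | nil =>
    intro c _ _ _ h
    rw [diffList_nil] at h
    exact ⟨1, one_ne_zero, by rw [h, map_zero]⟩
  | cons e E ih =>
    intro c hb hd hE h
    obtain ⟨M, hM, hMe⟩ := ih (diffOp e c) (hb.diffOp e)
      (by rw [diffOp_comm, hd, map_zero]) (fun x hx => hE x (List.mem_cons_of_mem _ hx))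
      (by rw [diffList_diffOp]; exact h)
    have hδ : crossProd d e ≠ 0 := hE e List.mem_cons_self
    refine ⟨M * crossProd d e, mul_ne_zero hM hδ, ?_⟩
    have hcramer : (M * crossProd d e) • a
        = (M * crossProd d a) • e + (M * crossProd a e) • d := by
      ext <;> simp [crossProd] <;> ring
    have hred : diffOp ((M * crossProd d e) • a) c = diffOp ((M * crossProd d a) • e) c := by
      funext p
      rw [diffOp_apply, diffOp_apply, hcramer, ← add_assoc,
        periodic_zsmul (diffOp_eq_zero_iff.mp hd)]
    apply diffOp_eq_zero_of_sq hb
    rw [hred, diffOp_comm]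
    apply diffOp_zsmul_eq_zero
    rw [diffOp_comm, mul_comm M, mul_smul]
    exact diffOp_zsmul_eq_zero hMe _

/-! ### Dilating a tiling -/

/-- Translation of functions on `ℤ²` as a representation of the (multiplicatively written)
lattice. -/
def translationHom (R : Type) [CommRing R] :
    Multiplicative (ℤ × ℤ) →* Module.End R (ℤ × ℤ → R) where
  toFun v :=
    { toFun := fun g p => g (p - v.toAdd)
      map_add' := fun _ _ => rfl
      map_smul' := fun _ _ => rfl }
  map_one' := by
    ext g p
    simp
  map_mul' v w := by
    ext g p
    simp only [toAdd_mul, Module.End.mul_apply, LinearMap.coe_mk, AddHom.coe_mk]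
    congr 1
    abel

theorem translationHom_apply (R : Type) [CommRing R] (v : ℤ × ℤ) (g : ℤ × ℤ → R)
    (p : ℤ × ℤ) : translationHom R (Multiplicative.ofAdd v) g p = g (p - v) := rfl

/-- Modulo a prime `P > |F|` the `P`-th power of the mask polynomial `∑ X ^ w v` is
`∑ X ^ (P • w v)`; applied to the tiling it gives `|F| ^ (P - 1) = 1`, and the range of values
`0, …, |F|` makes the congruence an equality. -/
theorem dilate_prime (F : Finset (ℤ × ℤ)) (hF : F.Nonempty) (t : ℤ × ℤ → ℤ)
    (ht : ∀ p, t p = 0 ∨ t p = 1)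
    (w : ℤ × ℤ → ℤ × ℤ) (hw : ∀ x, ∑ v ∈ F, t (x - w v) = 1) (P : ℕ) (hP : P.Prime)
    (hPF : F.card < P) : ∀ x, ∑ v ∈ F, t (x - (P : ℤ) • w v) = 1 := by
  have : Fact P.Prime := ⟨hP⟩
  intro x
  let A := AddMonoidAlgebra (ZMod P) (ℤ × ℤ)
  let Φ : A →ₐ[ZMod P] Module.End (ZMod P) (ℤ × ℤ → ZMod P) :=
    AddMonoidAlgebra.lift (ZMod P) _ (ℤ × ℤ) (translationHom (ZMod P))
  have hΦ : ∀ (u : ℤ × ℤ → ℤ × ℤ) (g : ℤ × ℤ → ZMod P) (p : ℤ × ℤ),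
      Φ (∑ v ∈ F, AddMonoidAlgebra.single (u v) 1) g p = ∑ v ∈ F, g (p - u v) := by
    intro u g p
    rw [map_sum, LinearMap.sum_apply, Finset.sum_apply]
    refine Finset.sum_congr rfl fun v _ => ?_
    have hsingle : Φ (AddMonoidAlgebra.single (u v) 1)
        = translationHom (ZMod P) (Multiplicative.ofAdd (u v)) :=
      (AddMonoidAlgebra.lift_single _ _ _).trans (one_smul _ _)
    rw [hsingle, translationHom_apply]
  have : CharP A P := charP_of_injective_algebraMap (algebraMap (ZMod P) A).injective P
  have hpow : (∑ v ∈ F, AddMonoidAlgebra.single (w v) 1 : A) ^ P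
      = ∑ v ∈ F, AddMonoidAlgebra.single ((P : ℤ) • w v) 1 := by
    rw [sum_pow_char]
    refine Finset.sum_congr rfl fun v _ => ?_
    rw [AddMonoidAlgebra.single_pow, one_pow, natCast_zsmul]
  set f : A := ∑ v ∈ F, AddMonoidAlgebra.single (w v) 1 with hf
  let T : ℤ × ℤ → ZMod P := fun p => (t p : ZMod P)
  have hfT : Φ f T = 1 := by
    funext p
    rw [hf, hΦ]
    simp only [T, Pi.one_apply]
    rw [← Int.cast_sum, hw p, Int.cast_one]
  have hone : ∀ n : ℕ, (Φ f ^ n) 1 = fun _ => (F.card : ZMod P) ^ n := by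
    intro n
    induction n with
    | zero => funext p; simp
    | succ n ih =>
      rw [pow_succ', Module.End.mul_apply, ih]
      funext p
      rw [hf, hΦ, Finset.sum_const, nsmul_eq_mul, pow_succ']
  have hcard : (F.card : ZMod P) ≠ 0 := by
    rw [Ne, ZMod.natCast_eq_zero_iff]
    exact fun h => absurd (Nat.le_of_dvd hF.card_pos h) (not_le.mpr hPF)
  have hfin : Φ (f ^ P) T = 1 := by
    obtain ⟨n, rfl⟩ : ∃ n, P = n + 1 := ⟨P - 1, by have := hP.pos; omega⟩
    rw [map_pow, pow_succ, Module.End.mul_apply, hfT, hone]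
    funext p
    exact ZMod.pow_card_sub_one_eq_one hcard
  rw [hpow] at hfin
  have hx := congrFun hfin x
  rw [hΦ] at hx
  simp only [T, Pi.one_apply] at hx
  rw [← Int.cast_sum, ← Int.cast_one, ZMod.intCast_eq_intCast_iff_dvd_sub] at hx
  have h0 : 0 ≤ ∑ v ∈ F, t (x - (P : ℤ) • w v) :=
    Finset.sum_nonneg fun v _ => by rcases ht (x - (P : ℤ) • w v) with h | h <;> rw [h] <;> norm_num
  have h1 : ∑ v ∈ F, t (x - (P : ℤ) • w v) ≤ F.card := by
    calc _ ≤ ∑ v ∈ F, (1 : ℤ) :=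
          Finset.sum_le_sum fun v _ => by rcases ht (x - (P : ℤ) • w v) with h | h <;> rw [h] <;> norm_num
      _ = F.card := by simp
  obtain ⟨k, hk⟩ := hx
  have hP2 : (2 : ℤ) ≤ P := by exact_mod_cast hP.two_le
  have hPF' : (F.card : ℤ) < P := by exact_mod_cast hPF
  -- `1 - S = P k` with `0 ≤ S < P` forces `k = 0`
  have hk0 : k = 0 := by
    have hk1 : k < 1 := by
      by_contra hcon
      nlinarith
    have hk2 : -1 < k := by
      by_contra hcon
      nlinarith
    omega
  rw [hk0] at hk
  linarith

theorem dilate (F : Finset (ℤ × ℤ)) (hF : F.Nonempty) (t : ℤ × ℤ → ℤ)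
    (ht : ∀ p, t p = 0 ∨ t p = 1) (htile : ∀ x, ∑ v ∈ F, t (x - v) = 1) (r : ℕ) :
    r ≠ 0 → (∀ P : ℕ, P.Prime → P ∣ r → F.card < P) →
      ∀ x, ∑ v ∈ F, t (x - (r : ℤ) • v) = 1 := by
  induction r using induction_on_primes with
  | zero => exact fun h => absurd rfl h
  | one => intro _ _ x; simpa using htile x
  | prime_mul P r hP ih =>
    intro h0 hlarge
    have hr := ih (fun h => h0 (by rw [h, mul_zero]))
      (fun Q hQ hQr => hlarge Q hQ (hQr.mul_left P))
    have := dilate_prime F hF t ht (fun v => (r : ℤ) • v) hr P hP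
      (hlarge P hP (dvd_mul_right P r))
    intro x
    rw [← this x]
    refine Finset.sum_congr rfl fun v _ => ?_
    rw [smul_smul]
    push_cast
    rfl

/-! ### Averaging over dilations -/

/-- Boundedness of a sequence of functions, uniform in the index. -/
def UniformlyBdd (h : ℕ → ℤ × ℤ → ℤ) : Prop := ∃ B : ℤ, ∀ N p, |h N p| ≤ B

theorem UniformlyBdd.add {h k : ℕ → ℤ × ℤ → ℤ} (hh : UniformlyBdd h) (hk : UniformlyBdd k) :
    UniformlyBdd (fun N => h N + k N) := by
  obtain ⟨B, hB⟩ := hh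
  obtain ⟨C, hC⟩ := hk
  exact ⟨B + C, fun N p => (abs_add_le _ _).trans (add_le_add (hB N p) (hC N p))⟩

theorem UniformlyBdd.diffOp {h : ℕ → ℤ × ℤ → ℤ} (hh : UniformlyBdd h) (v : ℤ × ℤ) :
    UniformlyBdd (fun N => diffOp v (h N)) := by
  obtain ⟨B, hB⟩ := hh
  exact ⟨B + B, fun N p => (abs_sub _ _).trans (add_le_add (hB _ _) (hB _ _))⟩

theorem UniformlyBdd.diffList {h : ℕ → ℤ × ℤ → ℤ} (hh : UniformlyBdd h)
    (L : List (ℤ × ℤ)) : UniformlyBdd (fun N => diffList L (h N)) := by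
  induction L with
  | nil => exact hh
  | cons v L ih => exact ih.diffOp v

theorem uniformlyBdd_diffList_sum (S : ℤ × ℤ → ℕ → ℤ × ℤ → ℤ) (q : ℤ)
    (hS : ∀ v, UniformlyBdd (fun N => diffOp (q • v) (S v N))) (V : List (ℤ × ℤ)) :
    UniformlyBdd
      (fun N => diffList (V.map fun v => q • v) (V.map fun v => S v N).sum) := by
  induction V with
  | nil => exact ⟨0, fun N p => by simp [diffList_nil]⟩
  | cons v V ih =>
    have h := ((hS v).diffList (V.map fun v => q • v)).add (ih.diffOp (q • v))
    convert h using 2 with N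
    simp only [List.map_cons, List.sum_cons]
    rw [diffList_cons, map_add, map_add, diffList_diffOp]

/-- Summing the relations `g + ∑ t(· + (1 + k q) v) = 0` over `k < N` and applying the difference
operators along all `q v` leaves `N` times the image of `g` equal to a telescoped, hence uniformly
bounded, quantity; so that image vanishes. -/
theorem diffList_eq_zero_of_dilates (t g : ℤ × ℤ → ℤ) (ht : BddFun t) (q : ℕ)
    (V : List (ℤ × ℤ))
    (h : ∀ (k : ℕ) (p : ℤ × ℤ),
      g p + (V.map fun v => t (p + ((1 + k * q : ℕ) : ℤ) • v)).sum = 0) :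
    diffList (V.map fun v => (q : ℤ) • v) g = 0 := by
  let S : ℤ × ℤ → ℕ → ℤ × ℤ → ℤ :=
    fun v N p => ∑ k ∈ Finset.range N, t (p + ((1 + k * q : ℕ) : ℤ) • v)
  have hS : ∀ v, UniformlyBdd (fun N => diffOp ((q : ℤ) • v) (S v N)) := by
    intro v
    obtain ⟨B, hB⟩ := ht
    refine ⟨B + B, fun N p => ?_⟩
    have : diffOp ((q : ℤ) • v) (S v N) p
        = t (p + ((1 + N * q : ℕ) : ℤ) • v) - t (p + ((1 + 0 * q : ℕ) : ℤ) • v) := by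
      rw [diffOp_apply, ← Finset.sum_range_sub (fun k => t (p + ((1 + k * q : ℕ) : ℤ) • v)),
        ← Finset.sum_sub_distrib]
      refine Finset.sum_congr rfl fun k _ => ?_
      congr 2
      rw [add_assoc, ← add_smul]
      congr 2
      push_cast
      ring
    change |diffOp ((q : ℤ) • v) (S v N) p| ≤ B + B
    rw [this]
    exact (abs_sub _ _).trans (add_le_add (hB _) (hB _))
  obtain ⟨B, hB⟩ := uniformlyBdd_diffList_sum S q hS V
  have hsum : ∀ N : ℕ, (V.map fun v => S v N).sum = -((N : ℤ) • g) := by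
    intro N
    have hN : ∀ (W : List (ℤ × ℤ)) (p : ℤ × ℤ), (W.map fun v => S v N).sum p
        = ∑ k ∈ Finset.range N, (W.map fun v => t (p + ((1 + k * q : ℕ) : ℤ) • v)).sum := by
      intro W p
      induction W with
      | nil => simp
      | cons v W ih =>
        simp only [List.map_cons, List.sum_cons, Pi.add_apply, Finset.sum_add_distrib]
        rw [ih]
    funext p
    rw [hN]
    have : ∀ k ∈ Finset.range N,
        (V.map fun v => t (p + ((1 + k * q : ℕ) : ℤ) • v)).sum = - g p :=
      fun k _ => by linarith [h k p]
    rw [Finset.sum_congr rfl this]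
    simp
  funext p
  by_contra hne
  have h1 : 1 ≤ |diffList (V.map fun v => (q : ℤ) • v) g p| := Int.one_le_abs hne
  have hB0 : 0 ≤ B := (abs_nonneg _).trans (hB 0 p)
  have h2 := hB (B + 1).toNat p
  simp only [hsum, map_neg, map_smul, Pi.neg_apply, Pi.smul_apply, smul_eq_mul, abs_neg,
    abs_mul] at h2
  rw [Int.toNat_of_nonneg (by linarith), abs_of_pos (by linarith : (0 : ℤ) < B + 1)] at h2
  nlinarith

/-! ### Annihilators of a tiling -/

/-- Every choice of a base point `v₀ ∈ F` gives an annihilator of `t - 1` that is a product of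
differences along multiples of the vectors `v₀ - v`. -/
theorem tiling_annihilator (F : Finset (ℤ × ℤ)) (t : ℤ × ℤ → ℤ)
    (ht : ∀ p, t p = 0 ∨ t p = 1) (htile : ∀ x, ∑ v ∈ F, t (x - v) = 1)
    (v₀ : ℤ × ℤ) (hv₀ : v₀ ∈ F) :
    diffList (((F.erase v₀).toList.map fun v => v₀ - v).map
      fun v => ((F.card.factorial : ℕ) : ℤ) • v) (fun p => t p - 1) = 0 := by
  have hb : BddFun t := ⟨1, fun p => by rcases ht p with h | h <;> simp [h]⟩
  apply diffList_eq_zero_of_dilates t _ hb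
  intro k p
  have hd := dilate F ⟨v₀, hv₀⟩ t ht htile (1 + k * F.card.factorial) (by omega) (by
    intro P hP hdvd
    by_contra hcon
    have h1 : P ∣ k * F.card.factorial :=
      (hP.dvd_factorial.mpr (not_lt.mp hcon)).mul_left k
    have h2 : P ∣ 1 := (Nat.dvd_add_left h1).mp hdvd
    exact hP.one_lt.ne' (Nat.dvd_one.mp h2))
    (p + ((1 + k * F.card.factorial : ℕ) : ℤ) • v₀)
  rw [← Finset.add_sum_erase F _ hv₀, add_sub_cancel_right] at hd
  rw [List.map_map, Finset.sum_map_toList]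
  have : ∀ v ∈ F.erase v₀,
      ((fun v => t (p + ((1 + k * F.card.factorial : ℕ) : ℤ) • v)) ∘ fun v => v₀ - v) v
        = t (p + ((1 + k * F.card.factorial : ℕ) : ℤ) • v₀
            - ((1 + k * F.card.factorial : ℕ) : ℤ) • v) := by
    intro v _
    simp only [Function.comp]
    rw [smul_sub, add_sub_assoc]
  rw [Finset.sum_congr rfl this]
  linarith

/-- Factors of an annihilator other than those along `a` and `b` can be removed, provided that
every direction `d` not parallel to `a` or `b` is isolated at some point `v₀` of `F`. -/
theorem remove_factors (F : Finset (ℤ × ℤ)) (t : ℤ × ℤ → ℤ)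
    (ht : ∀ p, t p = 0 ∨ t p = 1) (htile : ∀ x, ∑ v ∈ F, t (x - v) = 1) (a b : ℤ × ℤ)
    (hab : ∀ d : ℤ × ℤ, d ≠ 0 → crossProd a d = 0 ∨ crossProd b d = 0 ∨
      ∃ v₀ ∈ F, ∀ v ∈ F, v ≠ v₀ → crossProd d (v₀ - v) ≠ 0)
    (ha : a ≠ 0) (hb : b ≠ 0) (L : List (ℤ × ℤ)) :
    (∀ d ∈ L, d ≠ 0) → ∀ N : ℤ, N ≠ 0 →
      diffOp (N • a) (diffOp (N • b) (diffList L (fun p => t p - 1))) = 0 →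
      ∃ M : ℤ, M ≠ 0 ∧ diffOp (M • a) (diffOp (M • b) (fun p => t p - 1)) = 0 := by
  have hbg : BddFun (fun p => t p - 1) :=
    ⟨1, fun p => by rcases ht p with h | h <;> simp [h]⟩
  have hqF : ((F.card.factorial : ℕ) : ℤ) ≠ 0 := by
    exact_mod_cast F.card.factorial_ne_zero
  -- if `d` is parallel to `x`, some nonzero multiple of `x` lies in `ℤ d`
  have hpar : ∀ (x d : ℤ × ℤ) (c : ℤ × ℤ → ℤ), d ≠ 0 → x ≠ 0 → crossProd x d = 0 →
      diffOp d c = 0 → ∃ M : ℤ, M ≠ 0 ∧ diffOp (M • x) c = 0 := by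
    intro x d c hd hx hxd hc
    have hxd' : x.1 * d.2 = x.2 * d.1 := sub_eq_zero.mp hxd
    by_cases h1 : d.1 = 0
    · have h2 : d.2 ≠ 0 := fun h2 => hd (Prod.ext h1 h2)
      refine ⟨d.2, h2, ?_⟩
      have : d.2 • x = x.2 • d := by
        ext
        · simp only [Prod.smul_fst, smul_eq_mul]; linarith
        · simp only [Prod.smul_snd, smul_eq_mul]; ring
      rw [this]
      exact diffOp_zsmul_eq_zero hc _
    · refine ⟨d.1, h1, ?_⟩
      have : d.1 • x = x.1 • d := by
        ext
        · simp only [Prod.smul_fst, smul_eq_mul]; ring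
        · simp only [Prod.smul_snd, smul_eq_mul]; linarith
      rw [this]
      exact diffOp_zsmul_eq_zero hc _
  induction L with
  | nil => intro _ N hN h; exact ⟨N, hN, h⟩
  | cons d L ih =>
    intro hL N hN h
    have hd : d ≠ 0 := hL d List.mem_cons_self
    set g : ℤ × ℤ → ℤ := fun p => t p - 1 with hg
    set k := diffList L g with hk
    have hbk : BddFun k := hbg.diffList L
    set c := diffOp (N • a) (diffOp (N • b) k) with hc
    have hbc : BddFun c := (hbk.diffOp _).diffOp _
    have hdc : diffOp d c = 0 := by
      rw [← h, diffList_cons, hc, diffOp_comm d, diffOp_comm d]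
    have hkey : ∃ M : ℤ, M ≠ 0 ∧ (diffOp (M • a) c = 0 ∨ diffOp (M • b) c = 0) := by
      rcases hab d hd with h1 | h1 | ⟨v₀, hv₀, h1⟩
      · obtain ⟨M, hM, h2⟩ := hpar a d c hd ha h1 hdc
        exact ⟨M, hM, Or.inl h2⟩
      · obtain ⟨M, hM, h2⟩ := hpar b d c hd hb h1 hdc
        exact ⟨M, hM, Or.inr h2⟩
      · obtain ⟨M, hM, h2⟩ := exists_period_of_transverse d a
          (((F.erase v₀).toList.map fun v => v₀ - v).map
            fun v => ((F.card.factorial : ℕ) : ℤ) • v) c hbc hdc (by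
              intro e he
              simp only [List.mem_map, Finset.mem_toList, Finset.mem_erase] at he
              obtain ⟨_, ⟨v, ⟨hne, hv⟩, rfl⟩, rfl⟩ := he
              have h3 := mul_ne_zero hqF (h1 v hv hne)
              have h4 : crossProd d (((F.card.factorial : ℕ) : ℤ) • (v₀ - v))
                  = ((F.card.factorial : ℕ) : ℤ) * crossProd d (v₀ - v) := by
                simp only [crossProd, Prod.smul_fst, Prod.smul_snd, smul_eq_mul]
                ring
              rw [h4]
              exact h3)
          (by
            rw [hc, diffList_diffOp, diffList_diffOp, hk, diffList_comm,
              tiling_annihilator F t ht htile v₀ hv₀, map_zero, map_zero, map_zero])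
        exact ⟨M, hM, Or.inl h2⟩
    obtain ⟨M, hM, hM'⟩ := hkey
    have hmulA : ∀ c' : ℤ × ℤ → ℤ, ∀ x : ℤ × ℤ, diffOp (N • x) c' = 0 →
        diffOp ((M * N) • x) c' = 0 := by
      intro c' x hx
      rw [mul_smul]
      exact diffOp_zsmul_eq_zero hx _
    have hmulB : ∀ c' : ℤ × ℤ → ℤ, ∀ x : ℤ × ℤ, diffOp (M • x) c' = 0 →
        diffOp ((M * N) • x) c' = 0 := by
      intro c' x hx
      rw [mul_comm, mul_smul]
      exact diffOp_zsmul_eq_zero hx _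
    refine ih (fun e he => hL e (List.mem_cons_of_mem _ he)) (M * N) (mul_ne_zero hM hN) ?_
    -- replace both multiples `N`, `M` by `M N`, and drop the repeated factor
    rcases hM' with h1 | h1
    · apply diffOp_eq_zero_of_sq ((hbk.diffOp _))
      have h2 : diffOp (N • a) (diffOp ((M * N) • a) (diffOp (N • b) k)) = 0 := by
        rw [diffOp_comm]
        exact hmulB _ _ h1
      have h3 := hmulA _ _ h2
      have h4 : diffOp (N • b) (diffOp ((M * N) • a) (diffOp ((M * N) • a) k)) = 0 := by
        rw [diffOp_comm (N • b), diffOp_comm (N • b)]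
        exact h3
      have h5 := hmulA _ _ h4
      rw [diffOp_comm ((M * N) • b), diffOp_comm ((M * N) • b)] at h5
      exact h5
    · rw [diffOp_comm]
      apply diffOp_eq_zero_of_sq ((hbk.diffOp _))
      have h2 : diffOp (N • b) (diffOp ((M * N) • b) (diffOp (N • a) k)) = 0 := by
        rw [diffOp_comm (N • b), diffOp_comm (N • b)]
        exact hmulB _ _ h1
      have h3 := hmulA _ _ h2
      have h4 : diffOp (N • a) (diffOp ((M * N) • b) (diffOp ((M * N) • b) k)) = 0 := by
        rw [diffOp_comm (N • a), diffOp_comm (N • a)]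
        exact h3
      have h5 := hmulA _ _ h4
      rw [diffOp_comm ((M * N) • a), diffOp_comm ((M * N) • a)] at h5
      exact h5

/-! ### Splitting a set with vanishing mixed difference -/

/-- If the mixed difference along `A`, `B` of a `0`-`1` function vanishes, then on each coset of
`ℤ A + ℤ B` the function is `A`-periodic or `B`-periodic. -/
theorem split_of_mixed_diff (t : ℤ × ℤ → ℤ) (ht : ∀ p, t p = 0 ∨ t p = 1) (A B : ℤ × ℤ)
    (h : diffOp A (diffOp B t) = 0) (x : ℤ × ℤ) (i j : ℤ)
    (hx : t (x + i • A + j • B + A) ≠ t (x + i • A + j • B)) : t (x + B) = t x := by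
  have hA := periodic_zsmul (diffOp_eq_zero_iff.mp h)
  rw [diffOp_comm] at h
  have hB := diffOp_eq_zero_iff.mp h
  have hB1 := hB (x + i • A + j • B)
  have hB2 := periodic_zsmul hB (-j) (x + i • A + j • B)
  have hB3 := hB (x + i • A)
  have hA1 := hA i x
  rw [neg_smul, add_neg_cancel_right] at hB2
  simp only [diffOp_apply] at hB1 hB2 hB3 hA1
  have e1 := ht (x + i • A + j • B + A)
  have e2 := ht (x + i • A + j • B)
  have e3 := ht (x + i • A + A)
  have e4 := ht (x + i • A)
  have e5 := ht (x + i • A + B + A)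
  have e6 := ht (x + i • A + B)
  omega

theorem image_add_eq_of_iff {S : Set (ℤ × ℤ)} {g : ℤ × ℤ}
    (h : ∀ p, p + g ∈ S ↔ p ∈ S) : (fun p => p + g) '' S = S := by
  ext p
  constructor
  · rintro ⟨s, hs, rfl⟩
    exact (h s).mpr hs
  · intro hp
    refine ⟨p - g, (h _).mp (by rwa [sub_add_cancel]), sub_add_cancel p g⟩

theorem exists_partition (T : Set (ℤ × ℤ)) (t : ℤ × ℤ → ℤ) (ht : ∀ p, t p = 0 ∨ t p = 1)
    (htT : ∀ p, p ∈ T ↔ t p = 1) (A B : ℤ × ℤ) (hA : A ≠ 0) (hB : B ≠ 0)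
    (h : diffOp A (diffOp B t) = 0) :
    ∃ T₁ T₂ : Set (ℤ × ℤ), T = T₁ ∪ T₂ ∧ T₁ ∩ T₂ = ∅ ∧
      (T₁ = ∅ ∨ OnePeriodicSet T₁) ∧ (T₂ = ∅ ∨ OnePeriodicSet T₂) := by
  -- the union of the cosets of `ℤ A + ℤ B` on which `t` is `A`-periodic
  let G : Set (ℤ × ℤ) := {x | ∀ i j : ℤ, t (x + i • A + j • B + A) = t (x + i • A + j • B)}
  have hshift : ∀ (x : ℤ × ℤ) (m n : ℤ), x ∈ G → x + m • A + n • B ∈ G := by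
    intro x m n hx i j
    have := hx (m + i) (n + j)
    have e : x + m • A + n • B + i • A + j • B = x + (m + i) • A + (n + j) • B := by
      rw [add_smul, add_smul]
      abel
    rw [e]
    exact this
  have hGA : ∀ x, x + A ∈ G ↔ x ∈ G := by
    intro x
    constructor
    · intro hx
      have := hshift _ (-1) 0 hx
      simpa using this
    · intro hx
      have := hshift _ 1 0 hx
      simpa using this
  have hGB : ∀ x, x + B ∈ G ↔ x ∈ G := by
    intro x
    constructor
    · intro hx
      have := hshift _ 0 (-1) hx
      simpa using this
    · intro hx
      have := hshift _ 0 1 hx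
      simpa using this
  refine ⟨T ∩ G, T \ G, (Set.inter_union_sdiff T G).symm, ?_, Or.inr ⟨A, hA, ?_⟩,
    Or.inr ⟨B, hB, ?_⟩⟩
  · ext p
    simp only [Set.mem_inter_iff, Set.mem_sdiff, Set.mem_empty_iff_false]
    tauto
  · apply image_add_eq_of_iff
    intro p
    rw [Set.mem_inter_iff, Set.mem_inter_iff, hGA]
    refine and_congr_left fun hp => ?_
    have := hp 0 0
    simp only [zero_smul, add_zero] at this
    rw [htT, htT, this]
  · apply image_add_eq_of_iff
    intro p
    rw [Set.mem_sdiff, Set.mem_sdiff, hGB]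
    refine and_congr_left fun hp => ?_
    have hp' : ∃ i j : ℤ, t (p + i • A + j • B + A) ≠ t (p + i • A + j • B) := by
      by_contra hcon
      push Not at hcon
      exact hp hcon
    obtain ⟨i, j, hij⟩ := hp'
    rw [htT, htT, split_of_mixed_diff t ht A B h p i j hij]

/-! ### Directions -/

theorem toR_mem_span_of_crossProd {d v : ℤ × ℤ} (hd : d ≠ 0) (h : crossProd d v = 0) :
    toR v ∈ Submodule.span ℝ {toR d} := by
  rw [Submodule.mem_span_singleton]
  have h' : (d.1 : ℝ) * v.2 = d.2 * v.1 := by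
    have := sub_eq_zero.mp h
    exact_mod_cast this
  by_cases h1 : d.1 = 0
  · have h2 : (d.2 : ℝ) ≠ 0 := by
      intro h2
      exact hd (Prod.ext h1 (by exact_mod_cast h2))
    refine ⟨v.2 / d.2, ?_⟩
    ext
    · simp only [toR, Prod.smul_fst, smul_eq_mul]
      field_simp
      linarith
    · simp only [toR, Prod.smul_snd, smul_eq_mul]
      field_simp
  · have h2 : (d.1 : ℝ) ≠ 0 := by exact_mod_cast h1
    refine ⟨v.1 / d.1, ?_⟩
    ext
    · simp only [toR, Prod.smul_fst, smul_eq_mul]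
      field_simp
    · simp only [toR, Prod.smul_snd, smul_eq_mul]
      field_simp
      linarith

theorem crossProd_eq_zero_of_span {a d : ℤ × ℤ}
    (h : Submodule.span ℝ {toR a} = Submodule.span ℝ {toR d}) : crossProd a d = 0 := by
  have hd : toR d ∈ Submodule.span ℝ {toR a} := by
    rw [h]
    exact Submodule.mem_span_singleton_self _
  obtain ⟨r, hr⟩ := Submodule.mem_span_singleton.mp hd
  have h1 : r * (a.1 : ℝ) = d.1 := congrArg Prod.fst hr
  have h2 : r * (a.2 : ℝ) = d.2 := congrArg Prod.snd hr
  have : (a.1 : ℝ) * d.2 - a.2 * d.1 = 0 := by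
    rw [← h1, ← h2]
    ring
  unfold crossProd
  exact_mod_cast this

/-- An integer representative of `ℓ`; an arbitrary nonzero vector if `ℓ` is not spanned by an
integer vector. -/
theorem exists_rep (ℓ : Submodule ℝ (ℝ × ℝ)) : ∃ a : ℤ × ℤ, a ≠ 0 ∧
    ∀ d : ℤ × ℤ, d ≠ 0 → Submodule.span ℝ {toR d} = ℓ → crossProd a d = 0 := by
  by_cases h : ∃ a : ℤ × ℤ, a ≠ 0 ∧ Submodule.span ℝ {toR a} = ℓ
  · obtain ⟨a, ha, hl⟩ := h
    exact ⟨a, ha, fun d _ hd => crossProd_eq_zero_of_span (hl.trans hd.symm)⟩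
  · exact ⟨(1, 0), by simp, fun d hd hl => absurd ⟨d, hd, hl⟩ h⟩

/-- A direction outside `dirSet F` has a translate meeting `F` in a single point `v₀`. -/
theorem exists_isolated (F : Finset (ℤ × ℤ)) (d : ℤ × ℤ) (hd : d ≠ 0)
    (h : Submodule.span ℝ {toR d} ∉ dirSet (F : Set (ℤ × ℤ))) :
    ∃ v₀ ∈ F, ∀ v ∈ F, v ≠ v₀ → crossProd d (v₀ - v) ≠ 0 := by
  by_contra hcon
  push Not at hcon
  apply h
  refine ⟨⟨toR d, ?_, rfl⟩, ?_⟩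
  · intro h0
    apply hd
    have h1 : (d.1 : ℝ) = 0 := congrArg Prod.fst h0
    have h2 : (d.2 : ℝ) = 0 := congrArg Prod.snd h0
    exact Prod.ext (by exact_mod_cast h1) (by exact_mod_cast h2)
  · rintro a ⟨s, hs, hsa⟩
    obtain ⟨v, hv, hne, h0⟩ := hcon s hs
    refine ⟨s, hs, v, hv, hne.symm, hsa, ?_⟩
    have h1 := Submodule.sub_mem _ hsa (toR_mem_span_of_crossProd hd h0)
    have h2 : toR s - a - toR (s - v) = toR v - a := by
      ext <;> simp [toR]
    rwa [h2] at h1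

/-- The indicator function of a tiling satisfies the tiling equation. -/
theorem IsTiling.sum_eq_one {F : Finset (ℤ × ℤ)} {T : Set (ℤ × ℤ)} (hT : IsTiling F T)
    (x : ℤ × ℤ) : ∑ v ∈ F, T.indicator (fun _ => (1 : ℤ)) (x - v) = 1 := by
  obtain ⟨⟨s, v⟩, ⟨hs, hv, hx⟩, huniq⟩ := hT x
  simp only at hs hv hx
  rw [Finset.sum_eq_single v]
  · rw [Set.indicator_of_mem]
    rwa [hx, add_sub_cancel_right]
  · intro w hw hne
    rw [Set.indicator_of_notMem]
    intro hmem
    have := huniq (x - w, w) ⟨hmem, hw, (sub_add_cancel x w).symm⟩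
    exact hne (congrArg Prod.snd this)
  · exact fun h => absurd hv h

/-- If `F` is a cluster whose direction set contains at most two lines
and `T` is an `F`-tiling, then `T` is a disjoint union `T₁ ∪ T₂` where each `Tᵢ` is
either empty or `1`-periodic. -/
theorem stmt7 (F : Finset (ℤ × ℤ)) (hF : F.Nonempty)
    (hdir : ∃ ℓ₁ ℓ₂ : Submodule ℝ (ℝ × ℝ), dirSet (F : Set (ℤ × ℤ)) ⊆ {ℓ₁, ℓ₂})
    (T : Set (ℤ × ℤ)) (hT : IsTiling F T) :
    ∃ T₁ T₂ : Set (ℤ × ℤ), T = T₁ ∪ T₂ ∧ T₁ ∩ T₂ = ∅ ∧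
      (T₁ = ∅ ∨ OnePeriodicSet T₁) ∧ (T₂ = ∅ ∨ OnePeriodicSet T₂) := by
  obtain ⟨ℓ₁, ℓ₂, hsub⟩ := hdir
  obtain ⟨a, ha, haℓ⟩ := exists_rep ℓ₁
  obtain ⟨b, hb, hbℓ⟩ := exists_rep ℓ₂
  let t : ℤ × ℤ → ℤ := T.indicator (fun _ => (1 : ℤ))
  have ht : ∀ p, t p = 0 ∨ t p = 1 := fun p => by
    by_cases hp : p ∈ T
    · exact Or.inr (Set.indicator_of_mem hp _)
    · exact Or.inl (Set.indicator_of_notMem hp _)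
  have htT : ∀ p, p ∈ T ↔ t p = 1 := fun p => by
    by_cases hp : p ∈ T <;> simp [t, hp]
  have htile : ∀ x, ∑ v ∈ F, t (x - v) = 1 := hT.sum_eq_one
  have hab : ∀ d : ℤ × ℤ, d ≠ 0 → crossProd a d = 0 ∨ crossProd b d = 0 ∨
      ∃ v₀ ∈ F, ∀ v ∈ F, v ≠ v₀ → crossProd d (v₀ - v) ≠ 0 := by
    intro d hd
    by_cases hmem : Submodule.span ℝ {toR d} ∈ dirSet (F : Set (ℤ × ℤ))
    · rcases hsub hmem with h | h
      · exact Or.inl (haℓ d hd h)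
      · exact Or.inr (Or.inl (hbℓ d hd h))
    · exact Or.inr (Or.inr (exists_isolated F d hd hmem))
  obtain ⟨v₀, hv₀⟩ := hF
  obtain ⟨M, hM, hMab⟩ := remove_factors F t ht htile a b hab ha hb
    (((F.erase v₀).toList.map fun v => v₀ - v).map
      fun v => ((F.card.factorial : ℕ) : ℤ) • v)
    (by
      intro d hd
      simp only [List.mem_map, Finset.mem_toList, Finset.mem_erase] at hd
      obtain ⟨_, ⟨v, ⟨hne, _⟩, rfl⟩, rfl⟩ := hd
      exact smul_ne_zero (by exact_mod_cast F.card.factorial_ne_zero)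
        (sub_ne_zero.mpr hne.symm))
    1 one_ne_zero
    (by rw [tiling_annihilator F t ht htile v₀ hv₀, map_zero, map_zero])
  have hdiff : diffOp (M • b) (fun p => t p - 1) = diffOp (M • b) t := by
    funext p
    simp only [diffOp_apply]
    ring
  rw [hdiff] at hMab
  exact exists_partition T t ht htT (M • a) (M • b) (smul_ne_zero hM ha) (smul_ne_zero hM hb)
    hMab
end
end

section
/- Let p be a prime, F ⊆ ℤ² a cluster of cardinality p², and T an F-tiling. Then the orbit closure of the indicator configuration 1_T contains a point x that can be written as x = x₁ + x₂ (pointwise sum), where x₁, x₂ : ℤ² → {0,1} have disjoint supports and each xᵢ is either identically zero or 1-periodic. -/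
/-!
The indicator `1_T` itself decomposes, so no limit point has to be constructed.

Write `X^v` for translation by `v` and `f_n = ∑_{v ∈ F} X^{n v}`; a tiling satisfies `f_1 * 1_T = 1`.
For a prime `q ≠ p`, the Frobenius congruence `f_a ^ q ≡ f_{q a} (mod q)` gives
`f_{q a} * 1_T ≡ 1 (mod q)`, and averaging over `F` forces equality, so `f_n * 1_T = 1` for every
`n` prime to `p` (`count_dilate`, `count_coprime`).

Let `I` be the annihilator ideal of `1_T` in `ℚ[ℤ²]`, let `𝔭 ⊇ I` be prime and let `z(v)` be the
image of `X^v` in the fraction field of `ℚ[ℤ²] ⧸ 𝔭`. If `z` is not trivial then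
`∑_{v ∈ F} z(v)^{1 + p k} = 0` for all `k`; separating the values of `z(v)^p` by a Vandermonde
argument leaves vanishing sums of `p`-th roots of unity, whose length is a multiple of `p`
(`dvd_card_class`). Hence every `v₀ ∈ F` has at least `p` points `v ∈ F` with
`z(v - v₀)^p = 1`. Either these differences span a plane and `z` is torsion, or they are all parallel
to one vector `d`, and then each line of direction `d` through a point of `F` contains at least `p`
points of `F`. As `|F| = p²`, an extremality argument shows that at most two directions have this
property (`no_three_good`). So there are nonzero vectors `A`, `B`, depending on `F` only, such that
`P = (X^A - 1)(X^B - 1)` lies in every prime `𝔭 ⊇ I`, that is, `P ^ k ∈ I` for some `k`.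

Since `1_T` is bounded, the exponent can be taken to be `1` (`eq_zero_of_pow`), so
`(X^A - 1)(X^B - 1) 1_T = 0`. For a `{0,1}`-valued function this implies that on each coset of
`⟨A, B⟩` it is invariant under `A` or under `B` (`split_periodic`).
-/

noncomputable section

def IsBinary (c : ℤ × ℤ → ℂ) : Prop := ∀ u, c u = 0 ∨ c u = 1

def shift (g : ℤ × ℤ) (c : ℤ × ℤ → ℂ) : ℤ × ℤ → ℂ := fun u => c (u - g)

def OnePeriodic (c : ℤ × ℤ → ℂ) : Prop := ∃ g : ℤ × ℤ, g ≠ 0 ∧ shift g c = c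

/-- The orbit closure of a configuration: the closure of its translation orbit in the
product topology (for a `{0,1}`-valued configuration this coincides with the closure in
`{0,1}^{ℤ²}` with `{0,1}` discrete). -/
def orbitClosure (c : ℤ × ℤ → ℂ) : Set (ℤ × ℤ → ℂ) :=
  closure {y | ∃ g : ℤ × ℤ, y = shift g c}

/-! ### Translation operators and dilations of a tiling -/

open Classical in
/-- The number of `v ∈ F` with `u - n v ∈ T`, i.e. the value at `u` of `f_n * 1_T`. -/
def count (F : Finset (ℤ × ℤ)) (T : Set (ℤ × ℤ)) (n : ℕ) (u : ℤ × ℤ) : ℕ :=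
  ∑ v ∈ F, if u - n • v ∈ T then 1 else 0

/-- The action of `ℤ²` by translations on functions with values in `k`. -/
def shiftHom (k : Type) [CommRing k] :
    Multiplicative (ℤ × ℤ) →* Module.End k (ℤ × ℤ → k) where
  toFun v :=
    { toFun := fun c u => c (u - v.toAdd)
      map_add' := fun _ _ => rfl
      map_smul' := fun _ _ => rfl }
  map_one' := by ext c u; simp
  map_mul' v w := by
    apply LinearMap.ext; intro c; funext u
    change c (u - (v.toAdd + w.toAdd)) = c (u - v.toAdd - w.toAdd)
    rw [sub_sub]

/-- The convolution action of the group ring `k[ℤ²]` on functions `ℤ² → k`. -/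
def act (k : Type) [CommRing k] :
    AddMonoidAlgebra k (ℤ × ℤ) →ₐ[k] Module.End k (ℤ × ℤ → k) :=
  AddMonoidAlgebra.lift k _ _ (shiftHom k)

lemma act_single (k : Type) [CommRing k] (v : ℤ × ℤ) (c : ℤ × ℤ → k) (u : ℤ × ℤ) :
    act k (AddMonoidAlgebra.single v 1) c u = c (u - v) := by
  simp [act, shiftHom]

/-- The group ring element `f_n = ∑_{v ∈ F} X^{n v}`. -/
def clusterPoly (k : Type) [CommRing k] (F : Finset (ℤ × ℤ)) (n : ℕ) :
    AddMonoidAlgebra k (ℤ × ℤ) :=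
  ∑ v ∈ F, AddMonoidAlgebra.single (n • v) 1

lemma act_clusterPoly (k : Type) [CommRing k] (F : Finset (ℤ × ℤ)) (n : ℕ) (c : ℤ × ℤ → k)
    (u : ℤ × ℤ) : act k (clusterPoly k F n) c u = ∑ v ∈ F, c (u - n • v) := by
  simp [clusterPoly, map_sum, LinearMap.sum_apply, Finset.sum_apply, act_single]

lemma act_clusterPoly_indicator (k : Type) [CommRing k] (F : Finset (ℤ × ℤ)) (T : Set (ℤ × ℤ))
    (n : ℕ) (u : ℤ × ℤ) :
    act k (clusterPoly k F n) (T.indicator fun _ => 1) u = (count F T n u : k) := by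
  classical
  rw [act_clusterPoly]
  simp [count, Set.indicator_apply]

lemma act_clusterPoly_const (k : Type) [CommRing k] (F : Finset (ℤ × ℤ)) (n : ℕ) (a : k) :
    act k (clusterPoly k F n) (fun _ => a) = fun _ => (F.card : k) * a := by
  funext u
  rw [act_clusterPoly]
  simp

lemma count_one {F : Finset (ℤ × ℤ)} {T : Set (ℤ × ℤ)} (hT : IsTiling F T) (u : ℤ × ℤ) :
    count F T 1 u = 1 := by
  classical
  obtain ⟨⟨t, v⟩, ⟨ht, hv, huv⟩, huniq⟩ := hT u
  simp only at ht hv huv huniq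
  rw [count, Finset.sum_eq_single v]
  · have : u - 1 • v = t := by rw [huv]; simp
    rw [this, if_pos ht]
  · intro w hw hwv
    rw [if_neg]
    intro h
    have := huniq (u - 1 • w, w) ⟨h, hw, by simp⟩
    exact hwv (Prod.ext_iff.1 this).2
  · exact fun h => absurd hv h

/-- Dilating a tile by a prime `q` not dividing its cardinality preserves the tiling property:
the count is `≡ 1` modulo `q`, hence positive, and its sum over a translate of `a F` is `|F|`. -/
lemma count_dilate {F : Finset (ℤ × ℤ)} {T : Set (ℤ × ℤ)} {a q : ℕ} (hq : q.Prime)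
    (hqF : ¬ q ∣ F.card) (ha : ∀ u, count F T a u = 1) (u : ℤ × ℤ) :
    count F T (q * a) u = 1 := by
  classical
  have := Fact.mk hq
  have : CharP (AddMonoidAlgebra (ZMod q) (ℤ × ℤ)) q :=
    charP_of_injective_algebraMap (algebraMap (ZMod q) _).injective q
  have hpoly : clusterPoly (ZMod q) F a ^ q = clusterPoly (ZMod q) F (q * a) := by
    rw [clusterPoly, sum_pow_char]
    simp [clusterPoly, AddMonoidAlgebra.single_pow, mul_smul]
  have hone : act (ZMod q) (clusterPoly (ZMod q) F a) (T.indicator fun _ => 1) = fun _ => 1 := by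
    funext w
    rw [act_clusterPoly_indicator, ha w, Nat.cast_one]
  have hpow : ∀ m : ℕ, act (ZMod q) (clusterPoly (ZMod q) F a ^ (m + 1)) (T.indicator fun _ => 1)
      = fun _ => (F.card : ZMod q) ^ m := by
    intro m
    induction m with
    | zero => simpa using hone
    | succ m ih =>
      rw [pow_succ', map_mul, Module.End.mul_apply, ih, act_clusterPoly_const, pow_succ']
  have hmod : ∀ w, ((count F T (q * a) w : ℕ) : ZMod q) = 1 := by
    intro w
    have h := congrFun (hpow (q - 1)) w
    rw [Nat.sub_add_cancel hq.one_le, hpoly, act_clusterPoly_indicator] at h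
    rw [h]
    apply ZMod.pow_card_sub_one_eq_one
    rwa [Ne, ZMod.natCast_eq_zero_iff]
  have hpos : ∀ w, 1 ≤ count F T (q * a) w := by
    intro w
    rw [Nat.one_le_iff_ne_zero]
    intro h
    have := hmod w
    rw [h] at this
    simp at this
  have hsum : ∀ w, ∑ v ∈ F, count F T (q * a) (w - a • v) = ∑ v ∈ F, 1 := by
    intro w
    have : ∀ v ∈ F, count F T a (w - (q * a) • v) = 1 := fun v _ => ha _
    rw [← Finset.sum_congr rfl this]
    simp only [count]
    rw [Finset.sum_comm]
    refine Finset.sum_congr rfl fun v _ => Finset.sum_congr rfl fun v' _ => ?_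
    rw [sub_right_comm]
  rcases F.eq_empty_or_nonempty with rfl | ⟨v₀, hv₀⟩
  · simp at hqF
  have h := (Finset.sum_eq_sum_iff_of_le fun v _ => hpos (u + a • v₀ - a • v)).1
    (hsum (u + a • v₀)).symm v₀ hv₀
  simpa using h.symm

lemma count_coprime {F : Finset (ℤ × ℤ)} {T : Set (ℤ × ℤ)} {p : ℕ} (hp : p.Prime)
    (hcard : F.card = p ^ 2) (hT : IsTiling F T) (n : ℕ) :
    ¬ p ∣ n → ∀ u, count F T n u = 1 := by
  induction n using induction_on_primes with
  | zero => intro h; simp at h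
  | one => exact fun _ => count_one hT
  | prime_mul q a hq ih =>
    intro hn
    apply count_dilate hq
    · intro h
      rw [hcard] at h
      have := (Nat.prime_dvd_prime_iff_eq hq hp).1 (hq.dvd_of_dvd_pow h)
      exact hn (this ▸ dvd_mul_right q a)
    · exact ih fun h => hn (h.mul_left q)

/-! ### Vanishing power sums -/

/-- A power-sum system `∑ aᵢ bᵢ^k = 0` for all `k` splits according to the value of `bᵢ`. -/
lemma sum_class_eq_zero {K ι : Type*} [Field K] [DecidableEq K] (s : Finset ι) (a b : ι → K)
    (h : ∀ k : ℕ, ∑ i ∈ s, a i * b i ^ k = 0) (w : K) :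
    ∑ i ∈ s with b i = w, a i = 0 := by
  have hQ : ∀ Q : Polynomial K, ∑ i ∈ s, a i * Q.eval (b i) = 0 := by
    intro Q
    simp only [Polynomial.eval_eq_sum_range, Finset.mul_sum]
    rw [Finset.sum_comm]
    refine Finset.sum_eq_zero fun k _ => ?_
    rw [← mul_zero (Q.coeff k), ← h k, Finset.mul_sum]
    exact Finset.sum_congr rfl fun i _ => by ring
  -- this polynomial vanishes at every `b i` except those equal to `w`
  have h1 := hQ (∏ x ∈ (s.image b).erase w, (Polynomial.X - Polynomial.C x))
  simp only [Polynomial.eval_prod, Polynomial.eval_sub, Polynomial.eval_X,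
    Polynomial.eval_C] at h1
  have h2 : ∑ i ∈ s, a i * ∏ x ∈ (s.image b).erase w, (b i - x)
      = (∑ i ∈ s with b i = w, a i) * ∏ x ∈ (s.image b).erase w, (w - x) := by
    rw [Finset.sum_mul, Finset.sum_filter]
    refine Finset.sum_congr rfl fun i hi => ?_
    split_ifs with hw
    · rw [hw]
    · rw [Finset.prod_eq_zero (i := b i), mul_zero]
      · exact Finset.mem_erase.2 ⟨hw, Finset.mem_image_of_mem b hi⟩
      · exact sub_self _
  rw [h2] at h1
  refine (mul_eq_zero.1 h1).resolve_right ?_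
  refine Finset.prod_ne_zero_iff.2 ?_
  intro x hx h0
  exact (Finset.mem_erase.1 hx).1 (sub_eq_zero.1 h0).symm

/-- A vanishing sum of `p`-th roots of unity in characteristic zero has length divisible by `p`:
the cyclotomic polynomial divides the corresponding integer polynomial; evaluate at `1`. -/
lemma dvd_card_of_sum_roots {K ι : Type*} [Field K] [CharZero K] {p : ℕ} (hp : p.Prime)
    (s : Finset ι) (y : ι → K) (hy : ∀ i ∈ s, y i ^ p = 1) (h : ∑ i ∈ s, y i = 0) :
    p ∣ s.card := by
  have := Fact.mk hp
  have : NeZero p := ⟨hp.ne_zero⟩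
  by_cases hall : ∀ i ∈ s, y i = 1
  · rw [Finset.sum_congr rfl hall] at h
    have : s.card = 0 := by simpa using h
    simp [this]
  push Not at hall
  obtain ⟨j, hj, hj1⟩ := hall
  have hprim : IsPrimitiveRoot (y j) p := by
    have := IsPrimitiveRoot.orderOf (y j)
    rwa [orderOf_eq_prime (hy j hj) hj1] at this
  have hex : ∀ i, ∃ e : ℕ, i ∈ s → y j ^ e = y i := by
    intro i
    by_cases hi : i ∈ s
    · obtain ⟨e, -, he⟩ := hprim.eq_pow_of_pow_eq_one (hy i hi)
      exact ⟨e, fun _ => he⟩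
    · exact ⟨0, fun h => absurd h hi⟩
  choose e he using hex
  have haev : Polynomial.aeval (y j) (∑ i ∈ s, (Polynomial.X : Polynomial ℤ) ^ e i) = 0 := by
    simp only [map_sum, map_pow, Polynomial.aeval_X]
    rw [← h]
    exact Finset.sum_congr rfl fun i hi => he i hi
  have hdvd := minpoly.isIntegrallyClosed_dvd (hprim.isIntegral hp.pos) haev
  rw [← Polynomial.cyclotomic_eq_minpoly hprim hp.pos] at hdvd
  have h1 := Polynomial.eval_dvd (x := 1) hdvd
  rw [Polynomial.eval_one_cyclotomic_prime] at h1
  simp only [Polynomial.eval_finsetSum, Polynomial.eval_pow, Polynomial.eval_X, one_pow,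
    Finset.sum_const, nsmul_eq_mul, mul_one] at h1
  exact_mod_cast h1

lemma dvd_card_class {K : Type*} [Field K] [CharZero K] [DecidableEq K] {p : ℕ} (hp : p.Prime)
    (z : Multiplicative (ℤ × ℤ) →* K) (F : Finset (ℤ × ℤ))
    (h : ∀ k : ℕ, ∑ v ∈ F, z (.ofAdd v) ^ (1 + p * k) = 0) (v₀ : ℤ × ℤ) :
    p ∣ (F.filter fun v => z (.ofAdd (v - v₀)) ^ p = 1).card := by
  have hmul : ∀ v, z (.ofAdd (v - v₀)) * z (.ofAdd v₀) = z (.ofAdd v) := by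
    intro v
    rw [← map_mul, ← ofAdd_add, sub_add_cancel]
  have hz0 : z (.ofAdd v₀) ≠ 0 := ((Group.isUnit (Multiplicative.ofAdd v₀)).map z).ne_zero
  have h1 := sum_class_eq_zero F (fun v => z (.ofAdd v)) (fun v => z (.ofAdd v) ^ p)
    (by intro k; simpa [pow_add, pow_mul] using h k) (z (.ofAdd v₀) ^ p)
  have hfilter : (F.filter fun v => z (.ofAdd v) ^ p = z (.ofAdd v₀) ^ p)
      = F.filter fun v => z (.ofAdd (v - v₀)) ^ p = 1 := by
    refine Finset.filter_congr fun v _ => ?_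
    rw [← hmul v, mul_pow]
    exact mul_eq_right₀ (pow_ne_zero p hz0)
  rw [hfilter] at h1
  refine dvd_card_of_sum_roots hp _ (fun v => z (.ofAdd (v - v₀)))
    (fun v hv => (Finset.mem_filter.1 hv).2) ?_
  refine (mul_eq_zero.1 ?_).resolve_right hz0
  rw [Finset.sum_mul, ← h1]
  exact Finset.sum_congr rfl fun v _ => hmul v

/-! ### Directions in which a cluster is rich in points -/

/-- The determinant of two vectors; it vanishes exactly when they are parallel. -/
def det2 (d v : ℤ × ℤ) : ℤ := d.1 * v.2 - d.2 * v.1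

/-- Every line of direction `d` through a point of `F` contains at least `p` points of `F`. -/
def GoodDir (p : ℕ) (F : Finset (ℤ × ℤ)) (d : ℤ × ℤ) : Prop :=
  ∀ v₀ ∈ F, p ≤ (F.filter fun v => det2 d (v - v₀) = 0).card

lemma eq_of_det2 {d e v w : ℤ × ℤ} (hde : det2 d e ≠ 0) (h1 : det2 d (v - w) = 0)
    (h2 : det2 e (v - w) = 0) : v = w := by
  simp only [det2, Prod.fst_sub, Prod.snd_sub] at *
  have ha : (d.1 * e.2 - d.2 * e.1) * (v.1 - w.1) = 0 := by
    linear_combination e.1 * h1 - d.1 * h2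
  have hb : (d.1 * e.2 - d.2 * e.1) * (v.2 - w.2) = 0 := by
    linear_combination e.2 * h1 - d.2 * h2
  exact Prod.ext (sub_eq_zero.1 ((mul_eq_zero.1 ha).resolve_left hde))
    (sub_eq_zero.1 ((mul_eq_zero.1 hb).resolve_left hde))

/-- In a cluster with `p²` points and two good directions, every line of the first direction
meets every line of the second one inside the cluster: the lines of direction `d` through the at
least `p` points of a line of direction `e` are distinct, and together exhaust `F`. -/
lemma exists_meet {p : ℕ} {F : Finset (ℤ × ℤ)} (hcard : F.card = p ^ 2) {d e : ℤ × ℤ}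
    (hd : GoodDir p F d) (he : GoodDir p F e) (hde : det2 d e ≠ 0) {a b : ℤ × ℤ} (ha : a ∈ F)
    (hb : b ∈ F) : ∃ q ∈ F, det2 d (q - a) = 0 ∧ det2 e (q - b) = 0 := by
  classical
  set C := F.filter fun v => det2 e (v - b) = 0 with hC
  set L : ℤ × ℤ → Finset (ℤ × ℤ) := fun c => F.filter fun v => det2 d (v - c) = 0 with hL
  have hdisj : (C : Set (ℤ × ℤ)).PairwiseDisjoint L := by
    intro c hc c' hc' hne
    rw [Function.onFun, Finset.disjoint_left]
    intro v hv hv'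
    apply hne
    have hv1 := (Finset.mem_filter.1 hv).2
    have hv2 := (Finset.mem_filter.1 hv').2
    have hc1 := (Finset.mem_filter.1 hc).2
    have hc2 := (Finset.mem_filter.1 hc').2
    apply eq_of_det2 hde
    · simp only [det2, Prod.fst_sub, Prod.snd_sub] at *; linarith
    · simp only [det2, Prod.fst_sub, Prod.snd_sub] at *; linarith
  have hunion : C.biUnion L = F := by
    apply Finset.eq_of_subset_of_card_le
    · exact Finset.biUnion_subset.2 fun c _ => Finset.filter_subset _ _
    · rw [Finset.card_biUnion hdisj, hcard]
      calc p ^ 2 = p * p := sq p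
        _ ≤ C.card * p := Nat.mul_le_mul_right p (he b hb)
        _ ≤ ∑ c ∈ C, (L c).card := by
          rw [← smul_eq_mul]
          exact Finset.card_nsmul_le_sum _ _ _ fun c hc => hd c (Finset.mem_filter.1 hc).1
  have ha' := ha
  rw [← hunion, Finset.mem_biUnion] at ha'
  obtain ⟨c, hc, hac⟩ := ha'
  refine ⟨c, (Finset.mem_filter.1 hc).1, ?_, (Finset.mem_filter.1 hc).2⟩
  have := (Finset.mem_filter.1 hac).2
  simp only [det2, Prod.fst_sub, Prod.snd_sub] at *; linarith

/-- There are at most two good directions. A third linear form is a combination of the first two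
forms with nonzero coefficients; a point of `F` maximising both summands maximises the sum, and is
the only such point, contradicting that its line in the third direction has `p ≥ 2` points. -/
lemma no_three_good {p : ℕ} (hp : 2 ≤ p) {F : Finset (ℤ × ℤ)} (hF : F.Nonempty)
    (hcard : F.card = p ^ 2) {d e g : ℤ × ℤ} (hd : GoodDir p F d) (he : GoodDir p F e)
    (hg : GoodDir p F g) (hde : det2 d e ≠ 0) (hge : det2 g e ≠ 0) (hdg : det2 d g ≠ 0) :
    False := by
  obtain ⟨a, ha, hamax⟩ := F.exists_max_image (fun v => det2 g e * det2 d v) hF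
  obtain ⟨b, hb, hbmax⟩ := F.exists_max_image (fun v => det2 d g * det2 e v) hF
  obtain ⟨q, hq, hqa, hqb⟩ := exists_meet hcard hd he hde ha hb
  obtain ⟨q', hq', hne⟩ := Finset.exists_mem_ne
    (lt_of_lt_of_le (by omega) (hg q hq)) q
  obtain ⟨hq'F, hq'g⟩ := Finset.mem_filter.1 hq'
  have key : det2 d e * det2 g (q' - q)
      = det2 g e * det2 d (q' - q) + det2 d g * det2 e (q' - q) := by
    simp only [det2]; ring
  have hsub : ∀ x v w : ℤ × ℤ, det2 x (v - w) = det2 x v - det2 x w := by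
    intro x v w; simp only [det2, Prod.fst_sub, Prod.snd_sub]; ring
  have h1 := hamax q' hq'F
  have h2 := hbmax q' hq'F
  rw [hsub] at hqa hqb
  rw [← sub_eq_zero.1 hqa] at h1
  rw [← sub_eq_zero.1 hqb] at h2
  rw [hq'g, mul_zero] at key
  have e1 : det2 g e * det2 d (q' - q) = 0 := by
    rw [hsub, hsub] at key; rw [hsub]; linarith
  have e2 : det2 d g * det2 e (q' - q) = 0 := by linarith
  exact hne (eq_of_det2 hde ((mul_eq_zero.1 e1).resolve_left hge)
    ((mul_eq_zero.1 e2).resolve_left hdg))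

lemma exists_two_dirs {p : ℕ} (hp : 2 ≤ p) {F : Finset (ℤ × ℤ)} (hF : F.Nonempty)
    (hcard : F.card = p ^ 2) : ∃ A B : ℤ × ℤ, A ≠ 0 ∧ B ≠ 0 ∧
      ∀ d, d ≠ 0 → GoodDir p F d → det2 d A = 0 ∨ det2 d B = 0 := by
  by_cases h1 : ∃ d, d ≠ 0 ∧ GoodDir p F d
  · obtain ⟨d, hd0, hd⟩ := h1
    by_cases h2 : ∃ e, e ≠ 0 ∧ GoodDir p F e ∧ det2 d e ≠ 0
    · obtain ⟨e, he0, he, hde⟩ := h2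
      refine ⟨d, e, hd0, he0, fun g _ hg => ?_⟩
      by_contra! hcon
      refine no_three_good hp hF hcard hd he hg hde hcon.2 fun h => hcon.1 ?_
      simp only [det2] at h ⊢; linarith
    · push Not at h2
      refine ⟨d, d, hd0, hd0, fun g hg0 hg => Or.inl ?_⟩
      have := h2 g hg0 hg
      simp only [det2] at this ⊢; linarith
  · push Not at h1
    exact ⟨(1, 0), (1, 0), by simp, by simp, fun d hd0 hd => absurd hd (h1 d hd0)⟩

/-! ### Characters killed by the annihilator -/

/-- The kernel of a multiplicative character of `ℤ²`. -/
def charKer {K : Type*} [Field K] (z : Multiplicative (ℤ × ℤ) →* K) : AddSubgroup (ℤ × ℤ) where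
  carrier := {v | z (.ofAdd v) = 1}
  zero_mem' := by simp
  add_mem' {v w} hv hw := by
    simp only [Set.mem_ofPred_eq] at *
    rw [ofAdd_add, map_mul, hv, hw, mul_one]
  neg_mem' {v} hv := by
    simp only [Set.mem_ofPred_eq] at *
    have h : z (.ofAdd (-v)) * z (.ofAdd v) = 1 := by
      rw [← map_mul, ← ofAdd_add, neg_add_cancel, ofAdd_zero, map_one]
    rwa [hv, mul_one] at h

/-- A nonzero integer depending on `F` only that clears all denominators: it is a multiple of
`|w|²` for every nonzero difference `w` of points of `F` and of the determinant of any two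
independent differences. -/
def denom (F : Finset (ℤ × ℤ)) : ℤ :=
  (∏ x ∈ F ×ˢ F, if x.1 - x.2 = 0 then 1 else
      ((x.1 - x.2).1 ^ 2 + (x.1 - x.2).2 ^ 2)) *
  ∏ x ∈ (F ×ˢ F) ×ˢ (F ×ˢ F), if det2 (x.1.1 - x.1.2) (x.2.1 - x.2.2) = 0 then 1 else
      det2 (x.1.1 - x.1.2) (x.2.1 - x.2.2)

lemma denom_ne_zero (F : Finset (ℤ × ℤ)) : denom F ≠ 0 := by
  refine mul_ne_zero (Finset.prod_ne_zero_iff.2 fun x _ => ?_)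
    (Finset.prod_ne_zero_iff.2 fun x _ => ?_)
  · split_ifs with h
    · exact one_ne_zero
    · intro h0
      apply h
      have h1 : (x.1 - x.2).1 = 0 := by nlinarith [sq_nonneg (x.1 - x.2).1, sq_nonneg (x.1 - x.2).2]
      have h2 : (x.1 - x.2).2 = 0 := by nlinarith [sq_nonneg (x.1 - x.2).1, sq_nonneg (x.1 - x.2).2]
      exact Prod.ext h1 h2
  · split_ifs with h
    · exact one_ne_zero
    · exact h

lemma norm_dvd_denom {F : Finset (ℤ × ℤ)} {v w : ℤ × ℤ} (hv : v ∈ F) (hw : w ∈ F)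
    (h : v - w ≠ 0) : ((v - w).1 ^ 2 + (v - w).2 ^ 2) ∣ denom F := by
  apply Dvd.dvd.mul_right
  have := Finset.dvd_prod_of_mem (fun x : (ℤ × ℤ) × (ℤ × ℤ) => if x.1 - x.2 = 0 then (1 : ℤ) else
      ((x.1 - x.2).1 ^ 2 + (x.1 - x.2).2 ^ 2)) (Finset.mk_mem_product hv hw)
  simpa only [if_neg h] using this

lemma det2_dvd_denom {F : Finset (ℤ × ℤ)} {v w v' w' : ℤ × ℤ} (hv : v ∈ F) (hw : w ∈ F)
    (hv' : v' ∈ F) (hw' : w' ∈ F) (h : det2 (v - w) (v' - w') ≠ 0) :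
    det2 (v - w) (v' - w') ∣ denom F := by
  apply Dvd.dvd.mul_left
  have := Finset.dvd_prod_of_mem (fun x : ((ℤ × ℤ) × (ℤ × ℤ)) × ((ℤ × ℤ) × (ℤ × ℤ)) =>
      if det2 (x.1.1 - x.1.2) (x.2.1 - x.2.2) = 0 then (1 : ℤ) else
      det2 (x.1.1 - x.1.2) (x.2.1 - x.2.2))
      (Finset.mk_mem_product (Finset.mk_mem_product hv hw) (Finset.mk_mem_product hv' hw'))
  simpa only [if_neg h] using this

/-- A character of `ℤ²` annihilating all `f_n` with `n ≡ 1 (mod p)` is trivial on one of two fixed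
vectors, which depend on `F` only. -/
lemma char_trivial {K : Type*} [Field K] [CharZero K] {p : ℕ} (hp : p.Prime)
    {F : Finset (ℤ × ℤ)} (hF : F.Nonempty) {A B : ℤ × ℤ}
    (hAB : ∀ d, d ≠ 0 → GoodDir p F d → det2 d A = 0 ∨ det2 d B = 0)
    (z : Multiplicative (ℤ × ℤ) →* K)
    (h : ∀ k : ℕ, ∑ v ∈ F, z (.ofAdd v) ^ (1 + p * k) = 0) :
    ((p : ℤ) * denom F) • A ∈ charKer z ∨ ((p : ℤ) * denom F) • B ∈ charKer z := by
  classical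
  have hpw : ∀ w : ℤ × ℤ, z (.ofAdd w) ^ p = 1 → (p : ℤ) • w ∈ charKer z := by
    intro w hw
    change z (.ofAdd ((p : ℤ) • w)) = 1
    rw [natCast_zsmul, ofAdd_nsmul, map_pow, hw]
  have hclass : ∀ v₀ ∈ F, p ≤ (F.filter fun v => z (.ofAdd (v - v₀)) ^ p = 1).card := by
    intro v₀ hv₀
    apply Nat.le_of_dvd _ (dvd_card_class hp z F h v₀)
    exact Finset.card_pos.2 ⟨v₀, Finset.mem_filter.2 ⟨hv₀, by simp⟩⟩
  obtain ⟨a, ha⟩ := hF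
  obtain ⟨b, hb, hba⟩ := Finset.exists_mem_ne (lt_of_lt_of_le hp.one_lt (hclass a ha)) a
  obtain ⟨hbF, hbz⟩ := Finset.mem_filter.1 hb
  have hd0 : b - a ≠ 0 := sub_ne_zero.2 hba
  by_cases hpar : ∀ v ∈ F, ∀ w ∈ F, z (.ofAdd (v - w)) ^ p = 1 → det2 (b - a) (v - w) = 0
  · have hgood : GoodDir p F (b - a) := by
      intro v₀ hv₀
      refine (hclass v₀ hv₀).trans (Finset.card_le_card fun v hv => ?_)
      obtain ⟨hvF, hvz⟩ := Finset.mem_filter.1 hv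
      exact Finset.mem_filter.2 ⟨hvF, hpar v hvF v₀ hv₀ hvz⟩
    -- if `C` is parallel to `w` then `|w|² C = ⟨w, C⟩ w`
    have hmem : ∀ C, det2 (b - a) C = 0 → ((p : ℤ) * denom F) • C ∈ charKer z := by
      intro C hC
      obtain ⟨m, hm⟩ := norm_dvd_denom hbF ha hd0
      have : ((p : ℤ) * denom F) • C
          = (m * ((b - a).1 * C.1 + (b - a).2 * C.2)) • ((p : ℤ) • (b - a)) := by
        rw [hm]
        simp only [det2] at hC
        ext
        · simp only [Prod.smul_fst, smul_eq_mul]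
          linear_combination (-(p : ℤ) * m * (b - a).2) * hC
        · simp only [Prod.smul_snd, smul_eq_mul]
          linear_combination ((p : ℤ) * m * (b - a).1) * hC
      rw [this]
      exact AddSubgroup.zsmul_mem _ (hpw _ hbz) _
    exact (hAB _ hd0 hgood).imp (hmem A) (hmem B)
  · push Not at hpar
    obtain ⟨v, hv, w, hw, hvw, hdet⟩ := hpar
    -- two independent vectors in the kernel span a finite-index subgroup (Cramer)
    left
    obtain ⟨m, hm⟩ := det2_dvd_denom hbF ha hv hw hdet
    have : ((p : ℤ) * denom F) • A = (m * det2 A (v - w)) • ((p : ℤ) • (b - a))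
        + (m * det2 (b - a) A) • ((p : ℤ) • (v - w)) := by
      rw [hm]
      ext
      · simp only [Prod.fst_add, Prod.smul_fst, smul_eq_mul, det2]; ring
      · simp only [Prod.snd_add, Prod.smul_snd, smul_eq_mul, det2]; ring
    rw [this]
    exact AddSubgroup.add_mem _ (AddSubgroup.zsmul_mem _ (hpw _ hbz) _)
      (AddSubgroup.zsmul_mem _ (hpw _ hvw) _)

/-! ### The annihilator ideal -/

/-- The ideal of group ring elements that annihilate the function `c`. -/
def annIdeal (c : ℤ × ℤ → ℚ) : Ideal (AddMonoidAlgebra ℚ (ℤ × ℤ)) where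
  carrier := {g | act ℚ g c = 0}
  zero_mem' := by simp
  add_mem' {g h} hg hh := by
    simp only [Set.mem_ofPred_eq] at *
    rw [map_add, LinearMap.add_apply, hg, hh, add_zero]
  smul_mem' r g hg := by
    simp only [Set.mem_ofPred_eq] at *
    rw [smul_eq_mul, map_mul, Module.End.mul_apply, hg, map_zero]

lemma exists_pow_mem {p : ℕ} (hp : p.Prime) {F : Finset (ℤ × ℤ)} (hF : F.Nonempty)
    (hcard : F.card = p ^ 2) {T : Set (ℤ × ℤ)} (hT : IsTiling F T) :
    ∃ A B : ℤ × ℤ, A ≠ 0 ∧ B ≠ 0 ∧ ∃ k : ℕ,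
      ((AddMonoidAlgebra.single A 1 - 1) * (AddMonoidAlgebra.single B 1 - 1)) ^ k
        ∈ annIdeal (T.indicator fun _ => 1) := by
  obtain ⟨A, B, hA, hB, hAB⟩ := exists_two_dirs hp.two_le hF hcard
  have hN : (p : ℤ) * denom F ≠ 0 :=
    mul_ne_zero (by exact_mod_cast hp.ne_zero) (denom_ne_zero F)
  refine ⟨((p : ℤ) * denom F) • A, ((p : ℤ) * denom F) • B, smul_ne_zero hN hA,
    smul_ne_zero hN hB, ?_⟩
  rw [← Ideal.mem_radical_iff, Ideal.radical_eq_sInf, Submodule.mem_sInf]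
  rintro P ⟨hIP, hP⟩
  let K := FractionRing (AddMonoidAlgebra ℚ (ℤ × ℤ) ⧸ P)
  let φ : AddMonoidAlgebra ℚ (ℤ × ℤ) →+* K := (algebraMap _ K).comp (Ideal.Quotient.mk P)
  have hφ : ∀ g, φ g = 0 ↔ g ∈ P := by
    intro g
    simp only [φ, RingHom.comp_apply]
    rw [map_eq_zero_iff _ (IsFractionRing.injective _ K), Ideal.Quotient.eq_zero_iff_mem]
  have : CharZero K :=
    charZero_of_injective_ringHom (φ.comp (algebraMap ℚ _)).injective
  let z : Multiplicative (ℤ × ℤ) →* K := (φ : _ →* K).comp (AddMonoidAlgebra.of ℚ (ℤ × ℤ))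
  have hz : ∀ v, z (.ofAdd v) = φ (AddMonoidAlgebra.single v 1) := fun v => rfl
  have hker : ∀ v, v ∈ charKer z → AddMonoidAlgebra.single v (1 : ℚ) - 1 ∈ P := by
    intro v hv
    rw [← hφ, map_sub, map_one, sub_eq_zero]
    exact hv
  by_cases htriv : ∀ v, v ∈ charKer z
  · exact Ideal.mul_mem_right _ P (hker _ (htriv _))
  push Not at htriv
  obtain ⟨e, he⟩ := htriv
  have hsum : ∀ k : ℕ, ∑ v ∈ F, z (.ofAdd v) ^ (1 + p * k) = 0 := by
    intro k
    have hmem : (AddMonoidAlgebra.single e (1 : ℚ) - 1) * clusterPoly ℚ F (1 + p * k) ∈ P := by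
      apply hIP
      change act ℚ _ _ = 0
      have hndvd : ¬ p ∣ 1 + p * k := by
        rw [Nat.dvd_add_left (dvd_mul_right p k), Nat.dvd_one]
        exact hp.ne_one
      have hone : act ℚ (clusterPoly ℚ F (1 + p * k)) (T.indicator fun _ => 1)
          = fun _ => 1 := by
        funext u
        rw [act_clusterPoly_indicator, count_coprime hp hcard hT _ hndvd, Nat.cast_one]
      rw [map_mul, Module.End.mul_apply, hone]
      funext u
      rw [map_sub, map_one, LinearMap.sub_apply, Pi.sub_apply, act_single]
      simp
    have he' : AddMonoidAlgebra.single e (1 : ℚ) - 1 ∉ P := by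
      intro hmem'
      apply he
      rw [← hφ, map_sub, map_one, sub_eq_zero] at hmem'
      exact hmem'
    have h0 := (hφ _).2 ((hP.mem_or_mem hmem).resolve_left he')
    rw [clusterPoly, map_sum] at h0
    rw [← h0]
    refine Finset.sum_congr rfl fun v _ => ?_
    rw [hz, ← map_pow, AddMonoidAlgebra.single_pow, one_pow]
  rcases char_trivial hp hF hAB z hsum with h | h
  · exact Ideal.mul_mem_right _ P (hker _ h)
  · exact Ideal.mul_mem_left P _ (hker _ h)

/-! ### From a power of the annihilator to a splitting -/

/-- Boundedness of a rational-valued function. -/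
def Bdd (c : ℤ × ℤ → ℚ) : Prop := ∃ M : ℚ, ∀ u, |c u| ≤ M

lemma act_diff (A : ℤ × ℤ) (c : ℤ × ℤ → ℚ) (u : ℤ × ℤ) :
    act ℚ (AddMonoidAlgebra.single A 1 - 1) c u = c (u - A) - c u := by
  rw [map_sub, map_one, LinearMap.sub_apply, Pi.sub_apply, act_single]
  rfl

lemma Bdd.diff {c : ℤ × ℤ → ℚ} (hc : Bdd c) (A : ℤ × ℤ) :
    Bdd (act ℚ (AddMonoidAlgebra.single A 1 - 1) c) := by
  obtain ⟨M, hM⟩ := hc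
  refine ⟨M + M, fun u => ?_⟩
  rw [act_diff]
  exact (abs_sub _ _).trans (add_le_add (hM _) (hM _))

/-- A bounded function whose second difference along `A` vanishes is `A`-invariant, since it is
affine along `A`. -/
lemma eq_zero_of_sq {c : ℤ × ℤ → ℚ} (hc : Bdd c) (A : ℤ × ℤ)
    (h : act ℚ (AddMonoidAlgebra.single A 1 - 1)
      (act ℚ (AddMonoidAlgebra.single A 1 - 1) c) = 0) :
    act ℚ (AddMonoidAlgebra.single A 1 - 1) c = 0 := by
  obtain ⟨M, hM⟩ := hc
  funext u
  set g := act ℚ (AddMonoidAlgebra.single A 1 - 1) c with hg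
  have hinv : ∀ w, g (w - A) = g w := by
    intro w
    have := congrFun h w
    rw [act_diff] at this
    exact sub_eq_zero.1 this
  have hmul : ∀ n : ℕ, g (u - n • A) = g u ∧ c (u - n • A) = c u + n * g u := by
    intro n
    induction n with
    | zero => simp
    | succ n ih =>
      have hs : u - (n + 1) • A = u - n • A - A := by rw [succ_nsmul, sub_sub]
      have h2 : g (u - n • A) = c (u - n • A - A) - c (u - n • A) := by rw [hg, act_diff]
      rw [hs, hinv]
      refine ⟨ih.1, ?_⟩
      push_cast
      linarith [ih.1, ih.2]
  by_contra hne
  have hpos : 0 < |g u| := abs_pos.2 hne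
  obtain ⟨n, hn⟩ := exists_nat_gt ((M + M) / |g u|)
  rw [div_lt_iff₀ hpos] at hn
  have h1 : (n : ℚ) * g u = c (u - n • A) - c u := by linarith [(hmul n).2]
  have h2 : (n : ℚ) * |g u| ≤ M + M := by
    rw [← Nat.abs_cast (R := ℚ) n, ← abs_mul, h1]
    exact (abs_sub _ _).trans (add_le_add (hM _) (hM _))
  linarith

lemma eq_zero_of_pow (A : ℤ × ℤ) (k : ℕ) : ∀ c : ℤ × ℤ → ℚ, Bdd c →
    act ℚ ((AddMonoidAlgebra.single A 1 - 1) ^ k) c = 0 →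
    act ℚ (AddMonoidAlgebra.single A 1 - 1) c = 0 := by
  induction k with
  | zero =>
    intro c _ h
    rw [pow_zero, map_one, Module.End.one_apply] at h
    rw [h, map_zero]
  | succ k ih =>
    intro c hc h
    rw [pow_succ, map_mul, Module.End.mul_apply] at h
    exact eq_zero_of_sq hc A (ih _ (hc.diff A) h)

lemma mixed_diff {c : ℤ × ℤ → ℚ} (hc : Bdd c) (A B : ℤ × ℤ) (k : ℕ)
    (h : ((AddMonoidAlgebra.single A 1 - 1) * (AddMonoidAlgebra.single B 1 - 1)) ^ k
      ∈ annIdeal c) (u : ℤ × ℤ) :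
    c (u - A - B) - c (u - A) - (c (u - B) - c u) = 0 := by
  have hbdd : ∀ (j : ℕ) (b : ℤ × ℤ → ℚ), Bdd b →
      Bdd (act ℚ ((AddMonoidAlgebra.single B 1 - 1) ^ j) b) := by
    intro j
    induction j with
    | zero => intro b hb; rwa [pow_zero, map_one]
    | succ j ih =>
      intro b hb
      rw [pow_succ, map_mul, Module.End.mul_apply]
      exact ih _ (hb.diff B)
  have h1 : act ℚ (((AddMonoidAlgebra.single A 1 - 1) *
      (AddMonoidAlgebra.single B 1 - 1)) ^ k) c = 0 := h
  rw [mul_pow, map_mul, Module.End.mul_apply] at h1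
  have h2 := eq_zero_of_pow A k _ (hbdd k c hc) h1
  rw [← Module.End.mul_apply, ← map_mul, mul_comm, map_mul, Module.End.mul_apply] at h2
  have h3 := eq_zero_of_pow B k _ (hc.diff A) h2
  have h4 := congrFun h3 u
  rw [act_diff, act_diff, act_diff, sub_right_comm u B A, Pi.zero_apply] at h4
  linarith

/-- If the mixed difference of `1_T` along `A` and `B` vanishes, then on each coset of `⟨A, B⟩` the
set `T` is invariant under `A` or under `B`. -/
lemma invariant_or {T : Set (ℤ × ℤ)} {A B : ℤ × ℤ}
    (h : ∀ u, T.indicator (fun _ => (1 : ℚ)) (u - A - B) - T.indicator (fun _ => 1) (u - A)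
      - (T.indicator (fun _ => 1) (u - B) - T.indicator (fun _ => 1) u) = 0)
    (w : ℤ × ℤ) (hw : ¬ (w - A ∈ T ↔ w ∈ T)) (i j : ℤ) :
    w + i • A + j • B - B ∈ T ↔ w + i • A + j • B ∈ T := by
  classical
  set t : ℤ × ℤ → ℚ := T.indicator fun _ => 1 with ht
  have hbin : ∀ u, t u = if u ∈ T then 1 else 0 := fun u => by simp [ht, Set.indicator_apply]
  have hiff : ∀ u v, (u ∈ T ↔ v ∈ T) ↔ t u = t v := by
    intro u v
    rw [hbin, hbin]
    by_cases hu : u ∈ T <;> by_cases hv : v ∈ T <;> simp [hu, hv]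
  have h01 : ∀ u, t u = 0 ∨ t u = 1 := by
    intro u
    rw [hbin]
    split_ifs <;> simp
  -- the difference along `A` is `B`-invariant, and vice versa
  have hA : ∀ u, ∀ j : ℤ, t (u + j • B - A) - t (u + j • B) = t (u - A) - t u := by
    intro u j
    induction j using Int.induction_on with
    | zero => simp
    | succ n ih =>
      have e := h (u + ((n : ℤ) + 1) • B)
      have e1 : u + ((n : ℤ) + 1) • B - B = u + (n : ℤ) • B := by rw [add_smul, one_smul]; abel
      rw [sub_right_comm (_ + _) A B, e1] at e
      linarith
    | pred n ih =>
      have e := h (u + (-(n : ℤ)) • B)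
      have e1 : u + (-(n : ℤ)) • B - B = u + (-(n : ℤ) - 1) • B := by
        rw [sub_smul, one_smul]; abel
      rw [sub_right_comm (_ + _) A B, e1] at e
      linarith
  have hB : ∀ u, ∀ i : ℤ, t (u + i • A - B) - t (u + i • A) = t (u - B) - t u := by
    intro u i
    induction i using Int.induction_on with
    | zero => simp
    | succ n ih =>
      have e := h (u + ((n : ℤ) + 1) • A)
      have e1 : u + ((n : ℤ) + 1) • A - A = u + (n : ℤ) • A := by rw [add_smul, one_smul]; abel
      rw [e1] at e
      linarith
    | pred n ih =>
      have e := h (u + (-(n : ℤ)) • A)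
      have e1 : u + (-(n : ℤ)) • A - A = u + (-(n : ℤ) - 1) • A := by
        rw [sub_smul, one_smul]; abel
      rw [e1] at e
      linarith
  rw [hiff] at hw ⊢
  have e1 := hB (w + j • B) i
  rw [add_right_comm] at e1
  have e2 := hA w j
  have e3 := hA w (j - 1)
  have e4 : w + (j - 1) • B = w + j • B - B := by rw [sub_smul, one_smul]; abel
  rw [e4] at e3
  -- a nonzero difference `0 - 1` or `1 - 0` along `A` determines both values of `t`
  have e5 : t (w + j • B - B) = t (w + j • B) := by
    rcases h01 w with a1 | a1 <;> rcases h01 (w - A) with a2 | a2 <;>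
    rcases h01 (w + j • B) with a3 | a3 <;> rcases h01 (w + j • B - A) with a4 | a4 <;>
    rcases h01 (w + j • B - B) with a5 | a5 <;> rcases h01 (w + j • B - B - A) with a6 | a6 <;>
    simp only [a1, a2, a3, a4, a5, a6] at * <;> norm_num at *
  linarith

lemma split_periodic {T : Set (ℤ × ℤ)} {A B : ℤ × ℤ} (hA : A ≠ 0) (hB : B ≠ 0)
    (h : ∀ u, T.indicator (fun _ => (1 : ℚ)) (u - A - B) - T.indicator (fun _ => 1) (u - A)
      - (T.indicator (fun _ => 1) (u - B) - T.indicator (fun _ => 1) u) = 0) :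
    ∃ x₁ x₂ : ℤ × ℤ → ℂ, IsBinary x₁ ∧ IsBinary x₂ ∧
      (T.indicator fun _ => (1 : ℂ)) = x₁ + x₂ ∧ (∀ u : ℤ × ℤ, x₁ u = 0 ∨ x₂ u = 0) ∧
        OnePeriodic x₁ ∧ OnePeriodic x₂ := by
  classical
  -- `S` is the union of the cosets of `⟨A, B⟩` on which `T` is `A`-invariant
  set S : Set (ℤ × ℤ) :=
    {u | ∀ i j : ℤ, u + i • A + j • B - A ∈ T ↔ u + i • A + j • B ∈ T} with hS
  have hSA : ∀ u, u - A ∈ S ↔ u ∈ S := by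
    intro u
    constructor
    · intro hu i j
      have := hu (i + 1) j
      rwa [show u - A + (i + 1) • A + j • B = u + i • A + j • B by
        rw [add_smul, one_smul]; abel] at this
    · intro hu i j
      have := hu (i - 1) j
      rwa [show u + (i - 1) • A + j • B = u - A + i • A + j • B by
        rw [sub_smul, one_smul]; abel] at this
  have hSB : ∀ u, u - B ∈ S ↔ u ∈ S := by
    intro u
    constructor
    · intro hu i j
      have := hu i (j + 1)
      rwa [show u - B + i • A + (j + 1) • B = u + i • A + j • B by
        rw [add_smul, one_smul]; abel] at this
    · intro hu i j
      have := hu i (j - 1)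
      rwa [show u + i • A + (j - 1) • B = u - B + i • A + j • B by
        rw [sub_smul, one_smul]; abel] at this
  have hTA : ∀ u ∈ S, (u - A ∈ T ↔ u ∈ T) := by
    intro u hu
    simpa using hu 0 0
  have hTB : ∀ u, u ∉ S → (u - B ∈ T ↔ u ∈ T) := by
    intro u hu
    simp only [hS, Set.mem_ofPred_eq, not_forall] at hu
    obtain ⟨i, j, hij⟩ := hu
    have := invariant_or h _ hij (-i) (-j)
    rwa [show u + i • A + j • B + (-i) • A + (-j) • B = u by
      rw [neg_smul, neg_smul]; abel] at this
  refine ⟨(T ∩ S).indicator fun _ => 1, (T \ S).indicator fun _ => 1, ?_, ?_, ?_, ?_,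
    ⟨A, hA, ?_⟩, ⟨B, hB, ?_⟩⟩
  · intro u
    rw [Set.indicator_apply]
    split_ifs <;> simp
  · intro u
    rw [Set.indicator_apply]
    split_ifs <;> simp
  · funext u
    simp only [Pi.add_apply, Set.indicator_apply, Set.mem_inter_iff, Set.mem_sdiff]
    by_cases h1 : u ∈ T <;> by_cases h2 : u ∈ S <;> simp [h1, h2]
  · intro u
    simp only [Set.indicator_apply, Set.mem_inter_iff, Set.mem_sdiff]
    by_cases h2 : u ∈ S <;> simp [h2]
  · funext u
    simp only [shift, Set.indicator_apply, Set.mem_inter_iff, hSA]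
    by_cases h2 : u ∈ S
    · simp [h2, hTA u h2]
    · simp [h2]
  · funext u
    simp only [shift, Set.indicator_apply, Set.mem_sdiff, hSB]
    by_cases h2 : u ∈ S
    · simp [h2]
    · simp [h2, hTB u h2]

/-- If `p` is prime, `F ⊆ ℤ²` is a cluster of cardinality `p²` and `T`
is an `F`-tiling, then the orbit closure of `1_T` contains a point `x = x₁ + x₂` where
`x₁, x₂` are `{0,1}`-valued with disjoint supports and each `xᵢ` is identically zero or
`1`-periodic. -/
theorem stmt15 (p : ℕ) (hp : p.Prime) (F : Finset (ℤ × ℤ)) (hF : F.Nonempty)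
    (hcard : F.card = p ^ 2) (T : Set (ℤ × ℤ)) (hT : IsTiling F T) :
    ∃ x ∈ orbitClosure (T.indicator fun _ => (1 : ℂ)),
      ∃ x₁ x₂ : ℤ × ℤ → ℂ, IsBinary x₁ ∧ IsBinary x₂ ∧ x = x₁ + x₂ ∧
        (∀ u : ℤ × ℤ, x₁ u = 0 ∨ x₂ u = 0) ∧
        (x₁ = 0 ∨ OnePeriodic x₁) ∧ (x₂ = 0 ∨ OnePeriodic x₂) := by
  obtain ⟨A, B, hA, hB, k, hk⟩ := exists_pow_mem hp hF hcard hT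
  have hbdd : Bdd (T.indicator fun _ => 1) := by
    classical
    refine ⟨1, fun u => ?_⟩
    rw [Set.indicator_apply]
    split_ifs <;> simp
  obtain ⟨x₁, x₂, h1, h2, hsum, hdisj, hp1, hp2⟩ :=
    split_periodic hA hB (mixed_diff hbdd A B k hk)
  refine ⟨_, subset_closure ⟨0, ?_⟩, x₁, x₂, h1, h2, hsum, hdisj, Or.inr hp1, Or.inr hp2⟩
  funext u
  simp [shift]
end
end
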